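/- Let H be a real Hilbert space, let 0 < c < ∞, s ∈ {−1,1}, let J be a unitary operator on H, let n ∈ H be a unit vector, and let a ∈ M(H). Then the map W_{∞,c}[s,n,J;a] is a bijection of M(H) onto M(H), W_{∞,c}[s,n,J] is a continuous linear operator on M(H), and the inverse of W_{∞,c}[s,n,J;a] is again a continuous affine map (a continuous linear operator plus a constant vector). -/

import Mathlib

open scoped InnerProductSpace

/-- Generalized Lorentz transform `W_{λ,c}[s,n,J]` on `M(H) = ℝ × H` (case `λ < ∞`, `c < ∞`). -/
noncomputable def Wfin {H : Type*} [NormedAddCommGroup H] [InnerProductSpace ℝ H]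
    (lam c s : ℝ) (n : H) (J : H ≃ₗᵢ[ℝ] H) (w : ℝ × H) : ℝ × H :=
  ((s * w.1 - lam / c ^ 2 * ⟪n, w.2⟫_ℝ) / Real.sqrt |1 - lam ^ 2 / c ^ 2|,
    J (((lam * w.1 - s * ⟪n, w.2⟫_ℝ) / Real.sqrt |1 - lam ^ 2 / c ^ 2|) • n
      + (w.2 - ⟪n, w.2⟫_ℝ • n)))

/-- Generalized Lorentz transform `W_{λ,∞}[s,n,J]` on `M(H) = ℝ × H` (case `c = ∞`). -/
noncomputable def Wgal {H : Type*} [NormedAddCommGroup H] [InnerProductSpace ℝ H]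
    (lam s : ℝ) (n : H) (J : H ≃ₗᵢ[ℝ] H) (w : ℝ × H) : ℝ × H :=
  (s * w.1, J ((lam * w.1 - s * ⟪n, w.2⟫_ℝ) • n + (w.2 - ⟪n, w.2⟫_ℝ • n)))

/-- Generalized Lorentz transform `W_{∞,c}[s,n,J]` on `M(H) = ℝ × H` (case `λ = ∞`). -/
noncomputable def Wtach {H : Type*} [NormedAddCommGroup H] [InnerProductSpace ℝ H]
    (c s : ℝ) (n : H) (J : H ≃ₗᵢ[ℝ] H) (w : ℝ × H) : ℝ × H :=
  (-⟪n, w.2⟫_ℝ / c, J ((c * w.1) • n + (w.2 - ⟪n, w.2⟫_ℝ • n)))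

/-!
Up to the isometry `J` acting on the space component, `W_{∞,c}[s,n,J]` fixes the orthogonal
complement of the plane spanned by `e₀` and `n`, and on that plane it is a quarter turn
`(t, p) ↦ (-p / c, c t)` rescaled by `c`. Turning back is the same formula with `-c` in place
of `c`, so a single cancellation identity yields both one-sided inverses.
-/

section QuarterTurn

variable {H : Type*} [NormedAddCommGroup H] [InnerProductSpace ℝ H]

/-- The quarter turn of `ℝ × H` in the plane spanned by the time axis and `n`, rescaled by the
speed `c`: the transform `W_{∞,c}[s,n,J]` with `J` the identity. Negative `c` is allowed, so that
`-c` gives the inverse turn. -/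
noncomputable def quarterTurn (c : ℝ) (n : H) : (ℝ × H) →L[ℝ] (ℝ × H) :=
  let time := ContinuousLinearMap.fst ℝ ℝ H
  let space := ContinuousLinearMap.snd ℝ ℝ H
  let normal := (innerSL ℝ n).comp space
  (-(c⁻¹ • normal)).prod ((c • time).smulRight n + (space - normal.smulRight n))

theorem quarterTurn_apply (c : ℝ) (n : H) (w : ℝ × H) :
    quarterTurn c n w = (-⟪n, w.2⟫_ℝ / c, (c * w.1) • n + (w.2 - ⟪n, w.2⟫_ℝ • n)) := by
  simp [quarterTurn, div_eq_inv_mul]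

theorem inner_quarterTurn_snd (c : ℝ) {n : H} (hn : ‖n‖ = 1) (w : ℝ × H) :
    ⟪n, (quarterTurn c n w).2⟫_ℝ = c * w.1 := by
  simp only [quarterTurn_apply, inner_add_right, inner_sub_right, real_inner_smul_right,
    inner_self_eq_one_of_norm_eq_one hn, mul_one, sub_self, add_zero]

theorem quarterTurn_neg_quarterTurn {c : ℝ} (hc : c ≠ 0) {n : H} (hn : ‖n‖ = 1) (w : ℝ × H) :
    quarterTurn (-c) n (quarterTurn c n w) = w := by
  rw [quarterTurn_apply (-c), inner_quarterTurn_snd c hn, quarterTurn_apply c]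
  ext
  · exact (neg_div_neg_eq _ _).trans (mul_div_cancel_left₀ _ hc)
  · have normal_eq : -c * (-⟪n, w.2⟫_ℝ / c) = ⟪n, w.2⟫_ℝ := by field_simp
    simp only [normal_eq]
    module

/-- The quarter turn about a unit vector as a continuous linear automorphism of `ℝ × H`, with
inverse the quarter turn for `-c`. -/
noncomputable def quarterTurnEquiv {c : ℝ} (hc : c ≠ 0) {n : H} (hn : ‖n‖ = 1) :
    (ℝ × H) ≃L[ℝ] (ℝ × H) :=
  .equivOfInverse (quarterTurn c n) (quarterTurn (-c) n) (quarterTurn_neg_quarterTurn hc hn)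
    fun w => by simpa only [neg_neg] using quarterTurn_neg_quarterTurn (neg_ne_zero.mpr hc) hn w

/-- The transform `W_{∞,c}[s,n,J]` as a continuous linear automorphism of `ℝ × H`: a quarter turn
followed by `J` on the space component. -/
noncomputable def WtachEquiv {c : ℝ} (hc : c ≠ 0) {n : H} (hn : ‖n‖ = 1) (J : H ≃ₗᵢ[ℝ] H) :
    (ℝ × H) ≃L[ℝ] (ℝ × H) :=
  (quarterTurnEquiv hc hn).trans
    ((ContinuousLinearEquiv.refl ℝ ℝ).prodCongr J.toContinuousLinearEquiv)

theorem WtachEquiv_apply {c : ℝ} (hc : c ≠ 0) (s : ℝ) {n : H} (hn : ‖n‖ = 1) (J : H ≃ₗᵢ[ℝ] H)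
    (w : ℝ × H) : WtachEquiv hc hn J w = Wtach c s n J w :=
  congrArg (Prod.map id J) (quarterTurn_apply c n w)

end QuarterTurn

theorem stmt3_general {H : Type*} [NormedAddCommGroup H] [InnerProductSpace ℝ H]
    {c : ℝ} (hc : c ≠ 0) (s : ℝ) (J : H ≃ₗᵢ[ℝ] H) {n : H} (hn : ‖n‖ = 1) (a : ℝ × H) :
    Function.Bijective (fun w => Wtach c s n J (w + a)) ∧
    (∃ A : (ℝ × H) →L[ℝ] (ℝ × H), ∀ w, A w = Wtach c s n J w) ∧
    (∃ B : (ℝ × H) →L[ℝ] (ℝ × H), ∃ b : ℝ × H,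
      (∀ w, B (Wtach c s n J (w + a)) + b = w) ∧
      (∀ w, Wtach c s n J ((B w + b) + a) = w)) := by
  let W := WtachEquiv hc hn J
  simp only [← WtachEquiv_apply hc s hn J]
  refine ⟨W.bijective.comp (Equiv.addRight a).bijective, ⟨W, fun _ => rfl⟩, W.symm, -a, ?_, ?_⟩
  · intro w
    calc W.symm (W (w + a)) + -a = w + a + -a := by rw [W.symm_apply_apply]
      _ = w := add_neg_cancel_right w a
  · intro w
    calc W (W.symm w + -a + a) = W (W.symm w) := by rw [neg_add_cancel_right]
      _ = w := W.apply_symm_apply w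

/-- for `0 < c < ∞`, the map `W_{∞,c}[s,n,J;a]` is a bijection of `M(H)`,
`W_{∞,c}[s,n,J]` is a continuous linear operator, and the inverse of `W_{∞,c}[s,n,J;a]`
is a continuous affine map (a continuous linear operator plus a constant). -/
theorem stmt3 {H : Type*} [NormedAddCommGroup H] [InnerProductSpace ℝ H] [CompleteSpace H]
    (c : ℝ) (hc : 0 < c) (s : ℝ) (hs : s = 1 ∨ s = -1)
    (J : H ≃ₗᵢ[ℝ] H) (n : H) (hn : ‖n‖ = 1) (a : ℝ × H) :
    Function.Bijective (fun w => Wtach c s n J (w + a)) ∧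
    (∃ A : (ℝ × H) →L[ℝ] (ℝ × H), ∀ w, A w = Wtach c s n J w) ∧
    (∃ B : (ℝ × H) →L[ℝ] (ℝ × H), ∃ b : ℝ × H,
      (∀ w, B (Wtach c s n J (w + a)) + b = w) ∧
      (∀ w, Wtach c s n J ((B w + b) + a) = w)) :=
  stmt3_general hc.ne' s J hn a
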